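/- Let a, b be real numbers with b ≠ 0 and let f, g ∈ L¹(ℝ, ℂ). Then the function t ↦ (f⋆g)(t) is defined almost everywhere, belongs to L¹(ℝ, ℂ), and satisfies ‖f⋆g‖₁ ≤ ‖f‖₁·‖g‖₁. -/

import Mathlib

open MeasureTheory Filter

noncomputable def ccKernel (a b : ℝ) (f g : ℝ → ℂ) (t x : ℝ) : ℂ :=
  Complex.exp (-(Complex.I/2) * ((a:ℂ)/(b:ℂ)) * (t:ℂ)^2) *
    Complex.exp ((Complex.I/2) * ((a:ℂ)/(b:ℂ)) * (x:ℂ)^2) * f x *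
    (Complex.exp ((Complex.I/2) * ((a:ℂ)/(b:ℂ)) * ((x:ℂ)+(t:ℂ))^2) * g (x+t) +
     Complex.exp ((Complex.I/2) * ((a:ℂ)/(b:ℂ)) * ((x:ℂ)-(t:ℂ))^2) * g (x-t))

noncomputable def ccConv (a b : ℝ) (f g : ℝ → ℂ) (t : ℝ) : ℂ :=
  (1/2 : ℂ) * ∫ x : ℝ, ccKernel a b f g t x

/-!
With `c = a / b` and `F = e^{icx²/2} f`, `G = e^{icx²/2} g`, one has
`(f⋆g)(t) = e^{-ict²/2} · ½ ∫ F(x) (G(x + t) + G(x - t)) dx`. Writing `h⁻(x) = h(-x)`, this is a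
unimodular factor times the average of the ordinary convolutions `F⁻ ∗ G` and `F ∗ G⁻`. Unimodular
factors and reflections preserve the `L¹` norm, so the bound is Young's inequality in `L¹`.
-/

open ContinuousLinearMap
open scoped Convolution

section Convolution

variable {𝕜 G E₁ E₂ F : Type*} [NontriviallyNormedField 𝕜]
  [NormedAddCommGroup E₁] [NormedSpace 𝕜 E₁] [NormedAddCommGroup E₂] [NormedSpace 𝕜 E₂]
  [NormedAddCommGroup F] [NormedSpace 𝕜 F] [MeasurableSpace G]
  (L : E₁ →L[𝕜] E₂ →L[𝕜] F) {f : G → E₁} {g : G → E₂} {μ ν : Measure G}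

theorem ae_integrable_comp_sub [AddGroup G] [MeasurableAdd₂ G] [MeasurableNeg G] [SFinite μ]
    [μ.IsAddRightInvariant] [μ.IsNegInvariant] (hf : Integrable f μ) (hg : Integrable g μ) :
    ∀ᵐ t ∂μ, Integrable (fun x => L (f x) (g (x - t))) μ := by
  filter_upwards [hf.ae_convolution_exists L hg.comp_neg] with t ht
  simpa only [neg_sub] using ht.integrable

section Integrability

variable [AddCommGroup G] [MeasurableAdd₂ G] [MeasurableNeg G] [SFinite μ]
  [μ.IsAddRightInvariant] [μ.IsNegInvariant]

theorem ae_integrable_comp_add (hf : Integrable f μ) (hg : Integrable g μ) :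
    ∀ᵐ t ∂μ, Integrable (fun x => L (f x) (g (x + t))) μ := by
  filter_upwards [hf.comp_neg.ae_convolution_exists L hg] with t ht
  simpa only [neg_neg, sub_neg_eq_add, add_comm t] using ht.integrable.comp_neg

theorem ae_integrable_comp_add_add_comp_sub (hf : Integrable f μ) (hg : Integrable g μ) :
    ∀ᵐ t ∂μ, Integrable (fun x => L (f x) (g (x + t) + g (x - t))) μ := by
  filter_upwards [ae_integrable_comp_add L hf hg, ae_integrable_comp_sub L hf hg] with t hadd hsub
  simp only [map_add]
  exact hadd.add hsub

end Integrability

variable [NormedSpace ℝ F]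

theorem norm_convolution_le [Sub G] {t : G}
    (h : ConvolutionExistsAt (‖f ·‖) (‖g ·‖) t (mul ℝ ℝ) ν) :
    ‖(f ⋆[L, ν] g) t‖ ≤ ‖L‖ * ((‖f ·‖) ⋆[mul ℝ ℝ, ν] (‖g ·‖)) t := by
  rw [convolution_mul, ← integral_const_mul]
  refine norm_integral_le_of_norm_le (h.integrable.const_mul ‖L‖) (.of_forall fun x => ?_)
  simpa only [mul_apply', mul_assoc] using L.le_opNorm₂ (f x) (g (t - x))

theorem integral_norm_convolution_le [AddGroup G] [MeasurableAdd₂ G] [MeasurableNeg G]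
    [SFinite μ] [SFinite ν] [μ.IsAddRightInvariant] (hf : Integrable f ν) (hg : Integrable g μ) :
    ∫ t, ‖(f ⋆[L, ν] g) t‖ ∂μ ≤ ‖L‖ * ((∫ x, ‖f x‖ ∂ν) * ∫ x, ‖g x‖ ∂μ) := by
  have norms_integrable : Integrable ((‖f ·‖) ⋆[mul ℝ ℝ, ν] (‖g ·‖)) μ :=
    (hf.norm.convolution_integrand (mul ℝ ℝ) hg.norm).integral_prod_left
  calc ∫ t, ‖(f ⋆[L, ν] g) t‖ ∂μ
      ≤ ∫ t, ‖L‖ * ((‖f ·‖) ⋆[mul ℝ ℝ, ν] (‖g ·‖)) t ∂μ := by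
        refine integral_mono_of_nonneg (.of_forall fun _ => norm_nonneg _)
          (norms_integrable.const_mul _) ?_
        filter_upwards [hf.norm.ae_convolution_exists (mul ℝ ℝ) hg.norm] with t ht
        exact norm_convolution_le L ht
    _ = ‖L‖ * ((∫ x, ‖f x‖ ∂ν) * ∫ x, ‖g x‖ ∂μ) := by
        rw [integral_const_mul, integral_convolution _ hf.norm hg.norm, mul_apply']

/-- The symmetrized convolution `t ↦ ½ ∫ L (f x) (g (x + t) + g (x - t)) dμ(x)`, the convolution
underlying the Fourier cosine transform. As for `MeasureTheory.convolution`, its value is `0` where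
the integrand is not integrable. -/
noncomputable def symmConvolution [Add G] [Sub G] (f : G → E₁) (g : G → E₂)
    (L : E₁ →L[𝕜] E₂ →L[𝕜] F) (μ : Measure G) (t : G) : F :=
  (1 / 2 : ℝ) • ∫ x, L (f x) (g (x + t) + g (x - t)) ∂μ

theorem integral_comp_sub_eq_convolution [AddGroup G] (t : G) :
    ∫ x, L (f x) (g (x - t)) ∂μ = (f ⋆[L, μ] fun x => g (-x)) t := by
  simp only [convolution_def, neg_sub]

section SymmConvolution

variable [AddCommGroup G] [MeasurableNeg G] [μ.IsNegInvariant]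

theorem integral_comp_add_eq_convolution (t : G) :
    ∫ x, L (f x) (g (x + t)) ∂μ = ((fun x => f (-x)) ⋆[L, μ] g) t := by
  rw [convolution_def, ← integral_neg_eq_self]
  simp only [neg_add_eq_sub]

variable [MeasurableAdd₂ G] [SFinite μ] [μ.IsAddRightInvariant]

theorem symmConvolution_ae_eq (hf : Integrable f μ) (hg : Integrable g μ) :
    symmConvolution f g L μ =ᵐ[μ] fun t => (1 / 2 : ℝ) •
      (((fun x => f (-x)) ⋆[L, μ] g) t + (f ⋆[L, μ] fun x => g (-x)) t) := by
  filter_upwards [ae_integrable_comp_add L hf hg, ae_integrable_comp_sub L hf hg] with t hadd hsub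
  simp only [symmConvolution, map_add]
  rw [integral_add hadd hsub, integral_comp_add_eq_convolution, integral_comp_sub_eq_convolution]

theorem integrable_symmConvolution (hf : Integrable f μ) (hg : Integrable g μ) :
    Integrable (symmConvolution f g L μ) μ :=
  (((hf.comp_neg.integrable_convolution L hg).add
    (hf.integrable_convolution L hg.comp_neg)).smul (1 / 2 : ℝ)).congr
      (symmConvolution_ae_eq L hf hg).symm

theorem integral_norm_symmConvolution_le (hf : Integrable f μ) (hg : Integrable g μ) :
    ∫ t, ‖symmConvolution f g L μ t‖ ∂μ ≤ ‖L‖ * ((∫ x, ‖f x‖ ∂μ) * ∫ x, ‖g x‖ ∂μ) := by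
  set A := (fun x => f (-x)) ⋆[L, μ] g
  set B := f ⋆[L, μ] fun x => g (-x)
  have hA : Integrable A μ := hf.comp_neg.integrable_convolution L hg
  have hB : Integrable B μ := hf.integrable_convolution L hg.comp_neg
  have hA_le : ∫ t, ‖A t‖ ∂μ ≤ ‖L‖ * ((∫ x, ‖f x‖ ∂μ) * ∫ x, ‖g x‖ ∂μ) := by
    simpa only [integral_neg_eq_self (‖f ·‖)] using integral_norm_convolution_le L hf.comp_neg hg
  have hB_le : ∫ t, ‖B t‖ ∂μ ≤ ‖L‖ * ((∫ x, ‖f x‖ ∂μ) * ∫ x, ‖g x‖ ∂μ) := by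
    simpa only [integral_neg_eq_self (‖g ·‖)] using integral_norm_convolution_le L hf hg.comp_neg
  calc ∫ t, ‖symmConvolution f g L μ t‖ ∂μ
      ≤ ∫ t, 1 / 2 * (‖A t‖ + ‖B t‖) ∂μ := by
        refine integral_mono_ae (integrable_symmConvolution L hf hg).norm
          ((hA.norm.add hB.norm).const_mul _) ?_
        filter_upwards [symmConvolution_ae_eq L hf hg] with t ht
        rw [ht, norm_smul, Real.norm_of_nonneg one_half_pos.le]
        gcongr
        exact norm_add_le _ _
    _ = 1 / 2 * (∫ t, ‖A t‖ ∂μ + ∫ t, ‖B t‖ ∂μ) := by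
        rw [integral_const_mul, integral_add hA.norm hB.norm]
    _ ≤ ‖L‖ * ((∫ x, ‖f x‖ ∂μ) * ∫ x, ‖g x‖ ∂μ) := by linarith

end SymmConvolution

end Convolution

/-- The chirp `x ↦ e^{icx²/2}`, the unimodular factor by which `ccConv` differs from the symmetrized
convolution; the rate `c` is `a / b` in the notation of `ccKernel`. -/
noncomputable def chirp (c x : ℝ) : ℂ :=
  Complex.exp (Complex.I / 2 * c * (x : ℂ) ^ 2)

theorem norm_chirp (c x : ℝ) : ‖chirp c x‖ = 1 := by
  simp [chirp, Complex.norm_exp, ← Complex.ofReal_pow]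

theorem continuous_chirp (c : ℝ) : Continuous (chirp c) := by
  unfold chirp
  fun_prop

theorem norm_chirp_mul (c x : ℝ) (z : ℂ) : ‖chirp c x * z‖ = ‖z‖ := by
  rw [norm_mul, norm_chirp, one_mul]

theorem integrable_chirp_mul (c : ℝ) {μ : Measure ℝ} {f : ℝ → ℂ} (hf : Integrable f μ) :
    Integrable (fun x => chirp c x * f x) μ :=
  hf.bdd_mul (c := 1) (continuous_chirp c).aestronglyMeasurable
    (.of_forall fun x => (norm_chirp c x).le)

theorem ccKernel_eq_chirp_mul (a b : ℝ) (f g : ℝ → ℂ) (t x : ℝ) :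
    ccKernel a b f g t x = chirp (-(a / b)) t *
      mul ℝ ℂ (chirp (a / b) x * f x)
        (chirp (a / b) (x + t) * g (x + t) + chirp (a / b) (x - t) * g (x - t)) := by
  simp only [ccKernel, chirp, mul_apply', Complex.ofReal_neg, Complex.ofReal_div,
    Complex.ofReal_add, Complex.ofReal_sub, neg_mul, mul_neg, mul_assoc]

theorem ccConv_eq_chirp_mul_symmConvolution (a b : ℝ) (f g : ℝ → ℂ) :
    ccConv a b f g = fun t => chirp (-(a / b)) t *
      symmConvolution (fun x => chirp (a / b) x * f x)
        (fun x => chirp (a / b) x * g x) (mul ℝ ℂ) volume t := by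
  ext t
  simp only [ccConv, symmConvolution, ccKernel_eq_chirp_mul, integral_const_mul, Complex.real_smul]
  push_cast
  ring

theorem ccConv_memL1 (a b : ℝ) (hb : b ≠ 0) (f g : ℝ → ℂ)
    (hf : Integrable f) (hg : Integrable g) :
    (∀ᵐ t : ℝ, Integrable (fun x => ccKernel a b f g t x)) ∧
    Integrable (ccConv a b f g) ∧
    (∫ t : ℝ, ‖ccConv a b f g t‖) ≤ (∫ t : ℝ, ‖f t‖) * (∫ t : ℝ, ‖g t‖) := by
  have hF := integrable_chirp_mul (a / b) hf
  have hG := integrable_chirp_mul (a / b) hg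
  refine ⟨?_, ?_, ?_⟩
  · filter_upwards [ae_integrable_comp_add_add_comp_sub (mul ℝ ℂ) hF hG] with t ht
    simpa only [ccKernel_eq_chirp_mul] using ht.const_mul (chirp (-(a / b)) t)
  · rw [ccConv_eq_chirp_mul_symmConvolution]
    exact integrable_chirp_mul _ (integrable_symmConvolution (mul ℝ ℂ) hF hG)
  · have young := integral_norm_symmConvolution_le (mul ℝ ℂ) hF hG
    simpa only [ccConv_eq_chirp_mul_symmConvolution, norm_chirp_mul, opNorm_mul, one_mul]
      using young
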